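/- Suppose b is locally bounded on ℝ and (V, x1*, x2*) is a nontrivial solution of the free boundary problem (2.15)–(2.17). Then x1* ≤ x1ℓ, x2* ≥ x2r, and V(x) > 0 for all x ∈ (x1*, x2*). -/

import Mathlib

/-!
The claim is a sign analysis of the second order equation `u' = K V - β u - φ`, `u = V'`, with
`K = 2λ/σ² ≥ 0`, `β = 2b/σ²` and `φ = 2f/σ²`; it is packaged below as `LinSys`. Continuity turns the
boundary conditions into `V = V' = 0` at both endpoints, and the class of systems is stable under
restriction, under `(V, φ) ↦ (-V, -φ)` and under the reflection `x ↦ -x`.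

The central fact is `LinSys.forward`: if `φ ≤ 0` on `[a, c]` and `V a, V' a ≥ 0`, then `V, V' ≥ 0` on
`[a, c]`. It follows by continuous induction from a short-time statement: on a short interval, if
`-M < 0` is the minimum of `u`, integrating the equation from the last point before the minimiser
where `u ≥ 0` gives `-M ≥ -M/2`. No integrating factor is needed.

If `x1 ≥ x1l`, then on `[x1, x2]` the sign of `f` changes at most once, from nonnegative to
nonpositive, at `x2l`. Forward propagation from `x1` gives `V, V' ≤ 0` up to `x2l`, backward
propagation from `x2` gives `V ≥ 0 ≥ V'` down to `x2l`; hence `V x2l = 0` and `V` vanishes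
identically by monotonicity (`LinSys.eq_zero`). The case `x2 ≤ x2r` is its mirror image.

So `x1 < x1l` and `x2r < x2`. As `f < 0` next to both endpoints, propagation gives `V > 0` on
`(x1, x1r]` and on `[x2l, x2)` (`LinSys.pos`). If `V` were nonpositive somewhere in `(x1r, x2l)`,
where `f ≥ 0`, then at a minimiser `V ≤ 0` and `V' = 0`, so forward propagation would give
`V x2l ≤ 0`, a contradiction.
-/

open MeasureTheory Set Filter

noncomputable section

def LocBddAt (F : ℝ → ℝ) (x : ℝ) : Prop :=
  ∃ ε > 0, ∃ C : ℝ, ∀ y ∈ Set.Ioo (x - ε) (x + ε), |F y| ≤ C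

/-- shape of `f` as in Figure 1 -/
def Shape (f : ℝ → ℝ) (x1l x1r x2l x2r : ℝ) : Prop :=
  x1l ≤ x1r ∧ x1r < x2l ∧ x2l ≤ x2r ∧
  (∀ x ∈ Set.Ioo x1r x2l, 0 < f x) ∧
  (∀ x ∈ Set.Icc x1l x1r ∪ Set.Icc x2l x2r, f x = 0) ∧
  (∀ x ∈ Set.Iio x1l ∪ Set.Ioi x2r, f x < 0)

/-- Engelbert–Schmidt condition (2.2) together with Borel measurability -/
def ES (b σ : ℝ → ℝ) : Prop :=
  Measurable b ∧ Measurable σ ∧ (∀ x, σ x ≠ 0) ∧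
  LocallyIntegrable (fun x => 1 / (σ x) ^ 2) volume ∧
  LocallyIntegrable (fun x => b x / (σ x) ^ 2) volume

/-- condition (2.3) -/
def Cond23 (f σ : ℝ → ℝ) (x1l x1r x2l x2r : ℝ) : Prop :=
  LocallyIntegrable (fun x => f x / (σ x) ^ 2) volume ∧
  ∀ x ∉ Set.Icc x1l x1r ∪ Set.Icc x2l x2r, LocBddAt (fun y => 1 / f y) x

/-- `b` is locally bounded on `ℝ` -/
def LocBdd (b : ℝ → ℝ) : Prop := ∀ x : ℝ, LocBddAt b x

/-- a solution of the free boundary problem (2.15)–(2.17): `V = 0` outside `(x1, x2)`,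
`V ∈ C¹([x1, x2])` (with one-sided derivatives at the endpoints), the integral
equation (2.15) holds on `(x1, x2)`, and `V′(x2) = 0`. -/
def SolFBP1517 (b σ f : ℝ → ℝ) (lam : ℝ) (V : ℝ → ℝ) (x1 x2 : ℝ) : Prop :=
  x1 < x2 ∧
  (∀ x ∉ Set.Ioo x1 x2, V x = 0) ∧
  ∃ V' : ℝ → ℝ,
    (∀ x ∈ Set.Icc x1 x2, HasDerivWithinAt V (V' x) (Set.Icc x1 x2) x) ∧
    ContinuousOn V' (Set.Icc x1 x2) ∧
    (∀ x ∈ Set.Ioo x1 x2,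
      V' x = ∫ t in x1..x, (2 / (σ t) ^ 2) * (lam * V t - b t * V' t - f t)) ∧
    V' x2 = 0

/-! ### Linear systems in integrated form -/

/-- `V` is `C¹` on `[a, c]` with derivative `u`, and `u' = K V - β u - φ` holds in integrated form,
with integrable coefficients and `K ≥ 0`. -/
structure LinSys (K β φ V u : ℝ → ℝ) (a c : ℝ) : Prop where
  hK : ∀ x, 0 ≤ K x
  iK : IntervalIntegrable K volume a c
  iβ : IntervalIntegrable β volume a c
  iφ : IntervalIntegrable φ volume a c
  dV : ∀ x ∈ Icc a c, HasDerivWithinAt V (u x) (Icc a c) x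
  cu : ContinuousOn u (Icc a c)
  eq : ∀ x ∈ Icc a c, ∀ y ∈ Icc a c, u y - u x = ∫ t in x..y, (K t * V t - β t * u t - φ t)

namespace LinSys

variable {K β φ V u : ℝ → ℝ} {a c : ℝ}

lemma cV (h : LinSys K β φ V u a c) : ContinuousOn V (Icc a c) :=
  fun x hx => (h.dV x hx).continuousWithinAt

lemma restrict (h : LinSys K β φ V u a c) {a' c' : ℝ} (h1 : a ≤ a') (h2 : a' ≤ c') (h3 : c' ≤ c) :
    LinSys K β φ V u a' c' := by
  have hs : Icc a' c' ⊆ Icc a c := Icc_subset_Icc h1 h3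
  have hu : uIcc a' c' ⊆ uIcc a c := by
    rw [uIcc_of_le h2, uIcc_of_le (h1.trans (h2.trans h3))]; exact hs
  exact ⟨h.hK, h.iK.mono_set hu, h.iβ.mono_set hu, h.iφ.mono_set hu,
    fun x hx => (h.dV x (hs hx)).mono hs, h.cu.mono hs,
    fun x hx y hy => h.eq x (hs hx) y (hs hy)⟩

lemma neg (h : LinSys K β φ V u a c) :
    LinSys K β (fun x => -φ x) (fun x => -V x) (fun x => -u x) a c := by
  refine ⟨h.hK, h.iK, h.iβ, h.iφ.neg, fun x hx => (h.dV x hx).neg, h.cu.neg, ?_⟩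
  intro x hx y hy
  have := h.eq x hx y hy
  have e : -u y - -u x = -(u y - u x) := by ring
  rw [e, this, ← intervalIntegral.integral_neg]
  congr 1
  ext t
  ring

lemma reflect (h : LinSys K β φ V u a c) :
    LinSys (fun x => K (-x)) (fun x => -β (-x)) (fun x => φ (-x)) (fun x => V (-x))
      (fun x => -u (-x)) (-c) (-a) := by
  have hm : MapsTo (fun x : ℝ => -x) (Icc (-c) (-a)) (Icc a c) := by
    intro x hx
    simp only [mem_Icc] at hx ⊢
    constructor <;> linarith [hx.1, hx.2]
  have flip : ∀ {F : ℝ → ℝ}, IntervalIntegrable F volume a c →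
      IntervalIntegrable (fun x => F (-x)) volume (-c) (-a) := fun {F} hF =>
    ((IntervalIntegrable.iff_comp_neg (f := F) (a := a) (b := c)).1 hF).symm
  refine ⟨fun x => h.hK _, flip h.iK, (flip h.iβ).neg, flip h.iφ, ?_,
    (h.cu.comp continuous_neg.continuousOn hm).neg, ?_⟩
  · intro x hx
    have := (h.dV (-x) (hm hx)).comp x (hasDerivAt_neg x).hasDerivWithinAt hm
    rw [mul_neg_one] at this
    exact this
  · intro x hx y hy
    have := h.eq (-y) (hm hy) (-x) (hm hx)
    have e : -u (-y) - -u (-x) = u (-x) - u (-y) := by ring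
    rw [e, this, ← intervalIntegral.integral_comp_neg]
    congr 1
    ext t
    ring

/-- Mean value inequality. -/
lemma growth (h : LinSys K β φ V u a c) {m x y : ℝ} (hm : ∀ z ∈ Icc a c, m ≤ u z)
    (hx : x ∈ Icc a c) (hy : y ∈ Icc a c) (hxy : x ≤ y) : m * (y - x) ≤ V y - V x := by
  have hd : ∀ z ∈ interior (Icc a c), HasDerivAt V (u z) z := by
    intro z hz
    exact (h.dV z (interior_subset hz)).hasDerivAt (mem_interior_iff_mem_nhds.1 hz)
  exact (convex_Icc a c).mul_sub_le_image_sub_of_le_deriv h.cV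
    (fun z hz => (hd z hz).differentiableAt.differentiableWithinAt)
    (fun z hz => by rw [(hd z hz).deriv]; exact hm z (interior_subset hz)) x hx y hy hxy

lemma rhs_integrable (h : LinSys K β φ V u a c) (hac : a ≤ c) :
    IntervalIntegrable (fun t => K t * V t - β t * u t - φ t) volume a c := by
  have hV : ContinuousOn V (uIcc a c) := by rw [uIcc_of_le hac]; exact h.cV
  have hu : ContinuousOn u (uIcc a c) := by rw [uIcc_of_le hac]; exact h.cu
  exact ((h.iK.mul_continuousOn hV).sub (h.iβ.mul_continuousOn hu)).sub h.iφ

/-! ### Propagation of signs -/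

/-- Sign propagation on an interval so short that the coefficients have small integral. -/
lemma forward_short (h : LinSys K β φ V u a c) (hac : a ≤ c) (hc1 : c ≤ a + 1)
    (hsmall : ∫ t in a..c, (|β t| + K t) ≤ 1 / 2)
    (hφ : ∀ x ∈ Icc a c, φ x ≤ 0) (hVa : 0 ≤ V a) (hua : 0 ≤ u a) :
    ∀ x ∈ Icc a c, 0 ≤ u x := by
  obtain ⟨x0, hx0, hmin⟩ := isCompact_Icc.exists_isMinOn (nonempty_Icc.2 hac) h.cu
  by_contra! hneg
  obtain ⟨x', hx', hux'⟩ := hneg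
  have hu0 : u x0 < 0 := lt_of_le_of_lt (hmin hx') hux'
  -- `t` is the last point before the minimiser `x0` where `u` is nonnegative.
  have hcl : IsCompact (Icc a x0 ∩ u ⁻¹' Ici 0) :=
    isCompact_Icc.of_isClosed_subset
      ((h.cu.mono (Icc_subset_Icc_right hx0.2)).preimage_isClosed_of_isClosed isClosed_Icc
        isClosed_Ici) inter_subset_left
  obtain ⟨t, ⟨ht, htu⟩, htmax⟩ := hcl.exists_isGreatest ⟨a, ⟨le_rfl, hx0.1⟩, hua⟩
  have htu' : 0 ≤ u t := htu
  have hneg : ∀ s ∈ Ioo t x0, u s < 0 := by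
    intro s hs
    by_contra! hge
    exact absurd (htmax ⟨⟨ht.1.trans hs.1.le, hs.2.le⟩, hge⟩) (not_le.2 hs.1)
  have hts : t ∈ Icc a c := ⟨ht.1, ht.2.trans hx0.2⟩
  have hsub : uIcc t x0 ⊆ uIcc a c := by
    rw [uIcc_of_le ht.2, uIcc_of_le hac]; exact Icc_subset_Icc ht.1 hx0.2
  have iB : IntervalIntegrable (fun s => |β s| + K s) volume a c := h.iβ.abs.add h.iK
  have hle : ∫ s in t..x0, u x0 * (|β s| + K s) ≤ ∫ s in t..x0, (K s * V s - β s * u s - φ s) := by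
    refine intervalIntegral.integral_mono_on_of_le_Ioo ht.2 ((iB.mono_set hsub).const_mul _)
      ((h.rhs_integrable hac).mono_set hsub) ?_
    intro s hs
    have hsI : s ∈ Icc a c := ⟨ht.1.trans hs.1.le, hs.2.le.trans hx0.2⟩
    have hg := h.growth (fun z hz => hmin hz) ⟨le_rfl, hac⟩ hsI hsI.1
    have hV : u x0 ≤ V s := by nlinarith [hsI.1, hsI.2]
    have h1 : u x0 * K s ≤ K s * V s := by nlinarith [h.hK s]
    have h2 : u x0 * |β s| ≤ - (β s * u s) := by
      have hm : u x0 ≤ u s := hmin hsI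
      have : |β s * u s| = |β s| * (-u s) := by rw [abs_mul, abs_of_neg (hneg s hs)]
      have h3 := le_abs_self (β s * u s)
      nlinarith [abs_nonneg (β s)]
    linarith [hφ s hsI]
  rw [intervalIntegral.integral_const_mul, ← h.eq t hts x0 hx0] at hle
  have hle2 : ∫ s in t..x0, (|β s| + K s) ≤ ∫ s in a..c, (|β s| + K s) :=
    intervalIntegral.integral_mono_interval ht.1 ht.2 hx0.2
      (Eventually.of_forall fun s => add_nonneg (abs_nonneg _) (h.hK s)) iB
  nlinarith

/-- If `φ ≤ 0`, nonnegativity of `V` and of `V' = u` propagates to the right. -/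
lemma forward (h : LinSys K β φ V u a c) (hφ : ∀ x ∈ Icc a c, φ x ≤ 0) (hVa : 0 ≤ V a)
    (hua : 0 ≤ u a) : ∀ x ∈ Icc a c, 0 ≤ V x ∧ 0 ≤ u x := by
  have hVof : ∀ t ∈ Icc a c, (∀ x ∈ Icc a t, 0 ≤ u x) → 0 ≤ V t := by
    intro t ht hu
    have := (h.restrict le_rfl ht.1 ht.2).growth (m := 0) hu ⟨le_rfl, ht.1⟩ ⟨ht.1, le_rfl⟩ ht.1
    linarith
  have key : Icc a c ⊆ {x | 0 ≤ u x} := by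
    refine IsClosed.Icc_subset_of_forall_mem_nhdsGT_of_Icc_subset ?_ hua ?_
    · rw [inter_comm]
      exact h.cu.preimage_isClosed_of_isClosed isClosed_Icc isClosed_Ici
    · intro t ht hsub
      have hVt := hVof t ⟨ht.1, ht.2.le⟩ hsub
      have h' := h.restrict ht.1 ht.2.le le_rfl
      have iB : IntervalIntegrable (fun s => |β s| + K s) volume t c := h'.iβ.abs.add h'.iK
      have hcont : ContinuousOn (fun y => ∫ s in t..y, (|β s| + K s)) (uIcc t c) :=
        intervalIntegral.continuousOn_primitive_interval' iB left_mem_uIcc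
      rw [uIcc_of_le ht.2.le] at hcont
      have hev : ∀ᶠ y in nhdsWithin t (Ioi t), ∫ s in t..y, (|β s| + K s) < 1 / 2 := by
        have h0 := (hcont t ⟨le_rfl, ht.2.le⟩).mono Ioc_subset_Icc_self
        have h1 : Tendsto (fun y => ∫ s in t..y, (|β s| + K s)) (nhdsWithin t (Ioi t))
            (nhds (∫ s in t..t, (|β s| + K s))) := by
          rw [← nhdsWithin_Ioc_eq_nhdsGT ht.2]; exact h0
        rw [intervalIntegral.integral_same] at h1
        exact h1.eventually (gt_mem_nhds (by norm_num))
      obtain ⟨y, hy1, hy2⟩ := (hev.and (Ioc_mem_nhdsGT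
        (lt_min ht.2 (lt_add_one t)))).exists
      have hyc : y ≤ c := hy2.2.trans (min_le_left _ _)
      have := (h'.restrict le_rfl hy2.1.le hyc).forward_short hy2.1.le
        (hy2.2.trans (min_le_right _ _)) hy1.le
        (fun x hx => hφ x ⟨ht.1.trans hx.1, hx.2.trans hyc⟩) hVt (hsub ⟨ht.1, le_rfl⟩)
      exact mem_of_superset (Ioc_mem_nhdsGT hy2.1) fun x hx => this x ⟨hx.1.le, hx.2⟩
  intro x hx
  exact ⟨hVof x hx fun y hy => key ⟨hy.1, hy.2.trans hx.2⟩, key hx⟩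

lemma forward_neg (h : LinSys K β φ V u a c) (hφ : ∀ x ∈ Icc a c, 0 ≤ φ x) (hVa : V a ≤ 0)
    (hua : u a ≤ 0) : ∀ x ∈ Icc a c, V x ≤ 0 ∧ u x ≤ 0 := by
  intro x hx
  have := h.neg.forward (fun x hx => neg_nonpos.2 (hφ x hx)) (neg_nonneg.2 hVa)
    (neg_nonneg.2 hua) x hx
  exact ⟨neg_nonneg.1 this.1, neg_nonneg.1 this.2⟩

lemma backward (h : LinSys K β φ V u a c) (hφ : ∀ x ∈ Icc a c, φ x ≤ 0) (hVc : 0 ≤ V c)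
    (huc : u c ≤ 0) : ∀ x ∈ Icc a c, 0 ≤ V x ∧ u x ≤ 0 := by
  intro x hx
  have := h.reflect.forward (fun x hx => hφ _ ⟨by linarith [hx.2], by linarith [hx.1]⟩)
    (by simpa using hVc) (by simpa using huc) (-x) ⟨by linarith [hx.2], by linarith [hx.1]⟩
  simpa using this

lemma mono (h : LinSys K β φ V u a c) (hu : ∀ x ∈ Icc a c, 0 ≤ u x) : MonotoneOn V (Icc a c) := by
  intro x hx y hy hxy
  have := h.growth hu hx hy hxy
  linarith

lemma anti (h : LinSys K β φ V u a c) (hu : ∀ x ∈ Icc a c, u x ≤ 0) : AntitoneOn V (Icc a c) := by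
  intro x hx y hy hxy
  have := h.neg.mono (fun z hz => neg_nonneg.2 (hu z hz)) hx hy hxy
  exact neg_le_neg_iff.1 this

/-! ### Consequences of homogeneous boundary conditions -/

lemma eq_zero_of_nonpos (h : LinSys K β φ V u a c) (hφ : ∀ x ∈ Icc a c, φ x ≤ 0)
    (hVa : V a = 0) (hua : u a = 0) (hVc : V c = 0) : ∀ x ∈ Icc a c, V x = 0 := by
  intro x hx
  have hf := h.forward hφ hVa.ge hua.ge
  have hac : a ≤ c := hx.1.trans hx.2
  have := h.mono (fun z hz => (hf z hz).2) hx ⟨hac, le_rfl⟩ hx.2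
  exact le_antisymm (this.trans hVc.le) (hf x hx).1

/-- If `φ` changes sign at most once, from nonnegative to nonpositive, only the zero function
satisfies the four homogeneous boundary conditions. -/
lemma eq_zero (h : LinSys K β φ V u a c) (q : ℝ)
    (hφ1 : ∀ x ∈ Icc a c, x ≤ q → 0 ≤ φ x) (hφ2 : ∀ x ∈ Icc a c, q ≤ x → φ x ≤ 0)
    (hVa : V a = 0) (hua : u a = 0) (hVc : V c = 0) (huc : u c = 0) :
    ∀ x ∈ Icc a c, V x = 0 := by
  intro x hx
  rcases le_total q a with hq | hq
  · exact h.eq_zero_of_nonpos (fun x hx => hφ2 x hx (hq.trans hx.1)) hVa hua hVc x hx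
  rcases le_total c q with hq' | hq'
  · have := h.neg.eq_zero_of_nonpos (fun x hx => neg_nonpos.2 (hφ1 x hx (hx.2.trans hq')))
      (by simpa using hVa) (by simpa using hua) (by simpa using hVc) x hx
    simpa using this
  have hl := h.restrict le_rfl hq hq'
  have hr := h.restrict hq hq' le_rfl
  have fl := hl.forward_neg (fun x hx => hφ1 x ⟨hx.1, hx.2.trans hq'⟩ hx.2) hVa.le hua.le
  have fr := hr.backward (fun x hx => hφ2 x ⟨hq.trans hx.1, hx.2⟩ hx.1) hVc.ge huc.le
  have hVq : V q = 0 := le_antisymm (fl q ⟨hq, le_rfl⟩).1 (fr q ⟨le_rfl, hq'⟩).1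
  rcases le_total x q with hxq | hxq
  · have := hl.anti (fun z hz => (fl z hz).2) ⟨hx.1, hxq⟩ ⟨hq, le_rfl⟩ hxq
    exact le_antisymm (fl x ⟨hx.1, hxq⟩).1 (hVq ▸ this)
  · have := hr.anti (fun z hz => (fr z hz).2) ⟨le_rfl, hq'⟩ ⟨hxq, hx.2⟩ hxq
    exact le_antisymm (hVq ▸ this) (fr x ⟨hxq, hx.2⟩).1

/-- Zero initial data and `φ ≤ 0`, with strict inequality near `a`, force `V > 0` on `(a, c]`. -/
lemma pos (h : LinSys K β φ V u a c) {e : ℝ} (hae : a < e)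
    (hφ : ∀ x ∈ Icc a c, φ x ≤ 0) (hφe : ∀ x ∈ Ioo a e, φ x < 0) (hVa : V a = 0) (hua : u a = 0) :
    ∀ x ∈ Ioc a c, 0 < V x := by
  intro y hy
  have hf := h.forward hφ hVa.ge hua.ge
  have hm := h.mono (fun z hz => (hf z hz).2)
  by_contra! hVy
  have hV0 : ∀ z ∈ Icc a y, V z = 0 := by
    intro z hz
    have hz' : z ∈ Icc a c := ⟨hz.1, hz.2.trans hy.2⟩
    exact le_antisymm ((hm hz' ⟨hy.1.le, hy.2⟩ hz.2).trans hVy) (hf z hz').1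
  have hu0 : ∀ z ∈ Ico a y, u z = 0 := by
    intro z hz
    rcases hz.1.eq_or_lt with rfl | hz1
    · exact hua
    have hd : HasDerivAt V (u z) z := (h.dV z ⟨hz.1, hz.2.le.trans hy.2⟩).hasDerivAt
      (Icc_mem_nhds hz1 (hz.2.trans_le hy.2))
    have hd0 : HasDerivAt V 0 z := by
      refine (hasDerivAt_const z (0 : ℝ)).congr_of_eventuallyEq ?_
      filter_upwards [Icc_mem_nhds hz1 hz.2] with w hw using hV0 w hw
    exact hd.unique hd0
  obtain ⟨w, haw, hw⟩ := exists_between (lt_min hy.1 hae)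
  have hwy : w < y := hw.trans_le (min_le_left _ _)
  have hwe : w < e := hw.trans_le (min_le_right _ _)
  have hwc : w ≤ c := hwy.le.trans hy.2
  have heq := h.eq a ⟨le_rfl, haw.le.trans hwc⟩ w ⟨haw.le, hwc⟩
  have hint : ∫ t in a..w, (K t * V t - β t * u t - φ t) = ∫ t in a..w, -φ t := by
    refine intervalIntegral.integral_congr fun t ht => ?_
    rw [uIcc_of_le haw.le] at ht
    simp [hV0 t ⟨ht.1, ht.2.trans hwy.le⟩, hu0 t ⟨ht.1, ht.2.trans_lt hwy⟩]
  have hp : 0 < ∫ t in a..w, -φ t :=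
    intervalIntegral.intervalIntegral_pos_of_pos_on (h.restrict le_rfl haw.le hwc).iφ.neg
      (fun x hx => neg_pos.2 (hφe x ⟨hx.1, hx.2.trans hwe⟩)) haw
  rw [hint, hua, hu0 w ⟨haw.le, hwy⟩] at heq
  linarith

end LinSys

/-! ### The free boundary problem as a linear system -/

/-- A solution of the free boundary problem solves the linear system on the closed interval, and
letting `x ↓ x1` in the integral equation gives the fourth boundary condition `V'(x1) = 0`. -/
lemma SolFBP1517.linSys {b σ f : ℝ → ℝ} {lam : ℝ} (hlam : 0 ≤ lam) (hES : ES b σ)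
    (hfσ : LocallyIntegrable (fun x => f x / (σ x) ^ 2) volume) {V : ℝ → ℝ} {x1 x2 : ℝ}
    (hsol : SolFBP1517 b σ f lam V x1 x2) :
    ∃ u : ℝ → ℝ, LinSys (fun x => lam * (2 / (σ x) ^ 2)) (fun x => 2 / (σ x) ^ 2 * b x)
      (fun x => 2 / (σ x) ^ 2 * f x) V u x1 x2 ∧ u x1 = 0 ∧ u x2 = 0 := by
  obtain ⟨hlt, -, u, hd, hcu, heq, hu2⟩ := hsol
  obtain ⟨-, -, -, h1, h2⟩ := hES
  have loc : ∀ {F : ℝ → ℝ}, LocallyIntegrable F volume → IntervalIntegrable F volume x1 x2 := by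
    intro F hF
    exact (hF.integrableOn_isCompact isCompact_uIcc).intervalIntegrable
  have iK : IntervalIntegrable (fun x => lam * (2 / (σ x) ^ 2)) volume x1 x2 := by
    refine ((loc h1).const_mul (lam * 2)).congr_ae (ae_of_all _ fun x => ?_)
    ring
  have iβ : IntervalIntegrable (fun x => 2 / (σ x) ^ 2 * b x) volume x1 x2 := by
    refine ((loc h2).const_mul 2).congr_ae (ae_of_all _ fun x => ?_)
    ring
  have iφ : IntervalIntegrable (fun x => 2 / (σ x) ^ 2 * f x) volume x1 x2 := by
    refine ((loc hfσ).const_mul 2).congr_ae (ae_of_all _ fun x => ?_)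
    ring
  have hcV : ContinuousOn V (uIcc x1 x2) := by
    rw [uIcc_of_le hlt.le]; exact fun x hx => (hd x hx).continuousWithinAt
  have hcu' : ContinuousOn u (uIcc x1 x2) := by rw [uIcc_of_le hlt.le]; exact hcu
  set G : ℝ → ℝ := fun t =>
    lam * (2 / (σ t) ^ 2) * V t - 2 / (σ t) ^ 2 * b t * u t - 2 / (σ t) ^ 2 * f t with hG
  have iG : IntervalIntegrable G volume x1 x2 :=
    ((iK.mul_continuousOn hcV).sub (iβ.mul_continuousOn hcu')).sub iφ
  have hcG : ContinuousOn (fun x => ∫ t in x1..x, G t) (Icc x1 x2) := by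
    rw [← uIcc_of_le hlt.le]
    exact intervalIntegral.continuousOn_primitive_interval' iG left_mem_uIcc
  have hEq : EqOn u (fun x => ∫ t in x1..x, G t) (Icc x1 x2) := by
    refine Set.EqOn.of_subset_closure (s := Ioo x1 x2) ?_ hcu hcG Ioo_subset_Icc_self
      (closure_Ioo hlt.ne).ge
    intro x hx
    rw [heq x hx]
    refine intervalIntegral.integral_congr fun t _ => ?_
    simp only [hG]
    ring
  have iGx : ∀ x ∈ Icc x1 x2, IntervalIntegrable G volume x1 x := by
    intro x hx
    refine iG.mono_set ?_
    rw [uIcc_of_le hlt.le, uIcc_of_le hx.1]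
    exact Icc_subset_Icc_right hx.2
  refine ⟨u, ⟨fun x => by positivity, iK, iβ, iφ, hd, hcu, ?_⟩, ?_, hu2⟩
  · intro x hx y hy
    rw [hEq hx, hEq hy]
    exact intervalIntegral.integral_interval_sub_left (iGx y hy) (iGx x hx)
  · rw [hEq ⟨le_rfl, hlt.le⟩]
    exact intervalIntegral.integral_same

/-- **Lemma 2.8.** If `b` is locally bounded and `(V, x1*, x2*)` is a nontrivial solution of
the free boundary problem (2.15)–(2.17), then `x1* ≤ x1ℓ`, `x2* ≥ x2r` and `V > 0`
on `(x1*, x2*)`. -/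
theorem lemma28
    (b σ f : ℝ → ℝ) (lam : ℝ) (hlam : 0 ≤ lam)
    (hES : ES b σ) (hmf : Measurable f)
    (x1l x1r x2l x2r : ℝ) (hf : Shape f x1l x1r x2l x2r)
    (h23 : Cond23 f σ x1l x1r x2l x2r)
    (hb : LocBdd b)
    (V : ℝ → ℝ) (x1 x2 : ℝ)
    (hsol : SolFBP1517 b σ f lam V x1 x2) (hnt : ∃ x, V x ≠ 0) :
    x1 ≤ x1l ∧ x2r ≤ x2 ∧ ∀ x ∈ Set.Ioo x1 x2, 0 < V x := by
  obtain ⟨u, hS, hu1, hu2⟩ := hsol.linSys hlam hES h23.1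
  obtain ⟨hlt, hV0, -⟩ := hsol
  obtain ⟨h12, h23', h34, fpos, fzero, fneg⟩ := hf
  have hσ : ∀ x, 0 < 2 / (σ x) ^ 2 := fun x => by
    have := hES.2.2.1 x
    positivity
  have hV1 : V x1 = 0 := hV0 x1 fun h => lt_irrefl _ h.1
  have hV2 : V x2 = 0 := hV0 x2 fun h => lt_irrefl _ h.2
  -- The weak signs of `f` on the closed regions.
  have fL : ∀ x, x ≤ x1r → f x ≤ 0 := by
    intro x hx
    rcases lt_or_ge x x1l with h | h
    · exact (fneg x (Or.inl h)).le
    · exact (fzero x (Or.inl ⟨h, hx⟩)).le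
  have fR : ∀ x, x2l ≤ x → f x ≤ 0 := by
    intro x hx
    rcases lt_or_ge x2r x with h | h
    · exact (fneg x (Or.inr h)).le
    · exact (fzero x (Or.inr ⟨hx, h⟩)).le
  have fM : ∀ x, x1l ≤ x → x ≤ x2r → 0 ≤ f x := by
    intro x hx hx'
    rcases le_or_gt x x1r with h | h
    · exact (fzero x (Or.inl ⟨hx, h⟩)).ge
    rcases le_or_gt x2l x with h' | h'
    · exact (fzero x (Or.inr ⟨h', hx'⟩)).ge
    · exact (fpos x ⟨h, h'⟩).le
  have hnz : ¬ ∀ x ∈ Icc x1 x2, V x = 0 := by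
    intro hz
    obtain ⟨x, hx⟩ := hnt
    by_cases hxm : x ∈ Ioo x1 x2
    · exact hx (hz x (Ioo_subset_Icc_self hxm))
    · exact hx (hV0 x hxm)
  have hx1 : x1 < x1l := by
    by_contra! hge
    exact hnz (hS.eq_zero x2l
      (fun x hx hq => mul_nonneg (hσ x).le (fM x (hge.trans hx.1) (hq.trans h34)))
      (fun x _ hq => mul_nonpos_of_nonneg_of_nonpos (hσ x).le (fR x hq)) hV1 hu1 hV2 hu2)
  have hx2 : x2r < x2 := by
    by_contra! hge
    refine hnz fun x hx => ?_
    have := hS.reflect.eq_zero (-x1r)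
      (fun x hx hq => mul_nonneg (hσ _).le
        (fM (-x) (by linarith) (by linarith [hx.1])))
      (fun x _ hq => mul_nonpos_of_nonneg_of_nonpos (hσ _).le (fL (-x) (by linarith)))
      (by simpa using hV2) (by simpa using hu2) (by simpa using hV1) (by simpa using hu1)
      (-x) ⟨by linarith [hx.2], by linarith [hx.1]⟩
    simpa using this
  have hleft : ∀ x ∈ Ioc x1 x1r, 0 < V x :=
    (hS.restrict le_rfl (by linarith) (by linarith : x1r ≤ x2)).pos hx1
      (fun x hx => mul_nonpos_of_nonneg_of_nonpos (hσ x).le (fL x hx.2))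
      (fun x hx => mul_neg_of_pos_of_neg (hσ x) (fneg x (Or.inl hx.2))) hV1 hu1
  have hright : ∀ x ∈ Ico x2l x2, 0 < V x := by
    intro x hx
    have := (hS.restrict (by linarith : x1 ≤ x2l) (by linarith) le_rfl).reflect.pos
      (e := -x2r) (by linarith)
      (fun x hx => mul_nonpos_of_nonneg_of_nonpos (hσ _).le (fR (-x) (by linarith [hx.2])))
      (fun x hx => mul_neg_of_pos_of_neg (hσ _)
        (fneg (-x) (Or.inr (show x2r < -x by linarith [hx.2]))))
      (by simpa using hV2) (by simpa using hu2) (-x) ⟨by linarith [hx.2], by linarith [hx.1]⟩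
    simpa using this
  refine ⟨hx1.le, hx2.le, fun x hx => ?_⟩
  rcases le_or_gt x x1r with h | h
  · exact hleft x ⟨hx.1, h⟩
  rcases le_or_gt x2l x with h' | h'
  · exact hright x ⟨h', hx.2⟩
  by_contra! hVx
  have hsub : Icc x1r x2l ⊆ Icc x1 x2 := Icc_subset_Icc (by linarith) (by linarith)
  obtain ⟨z, hz, hmin⟩ := isCompact_Icc.exists_isMinOn (nonempty_Icc.2 h23'.le)
    (hS.cV.mono hsub)
  have hVz : V z ≤ 0 := (hmin ⟨h.le, h'.le⟩).trans hVx
  have hend1 := hleft x1r ⟨by linarith, le_rfl⟩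
  have hend2 := hright x2l ⟨le_rfl, by linarith⟩
  have hz1 : x1r < z := lt_of_le_of_ne hz.1 (by rintro rfl; linarith)
  have hz2 : z < x2l := lt_of_le_of_ne hz.2 (by rintro rfl; linarith)
  have hd : HasDerivAt V (u z) z :=
    (hS.dV z (hsub hz)).hasDerivAt (Icc_mem_nhds (by linarith) (by linarith))
  have huz : u z = 0 := (hmin.isLocalMin (Icc_mem_nhds hz1 hz2)).hasDerivAt_eq_zero hd
  have := (hS.restrict (by linarith : x1 ≤ z) hz.2 (by linarith)).forward_neg
    (fun x hx => mul_nonneg (hσ x).le (fM x (by linarith [hx.1]) (by linarith [hx.2])))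
    hVz huz.le x2l ⟨hz.2, le_rfl⟩
  linarith [this.1]
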